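/- For every M ≥ 1, the graph Γ(M) has finitely many connected components; moreover, every connected component of Γ(M) contains a vertex belonging to the finite set {(t_1,…,t_l) ∈ ℤ^l(s) : t_{i+1} − t_i ≤ M − 1 for all 0 ≤ i ≤ l−1}, where one puts t_0 := n + t_l. -/

import Mathlib

/-!
The maps `σ̇_i` are the reflections in the walls of the alcove `t_1 ≥ ⋯ ≥ t_l ≥ t_1 − n`, whose
barycentre is, up to translation, the point with `j`-th entry `− n j / l`. If a vertex `v` is
outside the small set, some wall satisfies `v_{i+1} − v_i ≥ M > 0`; then `σ̇_i.v → v` is an arrow of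
`Γ(M)` and `σ̇_i.v` lies on the same side of the wall as the barycentre while `v` does not, so that
`σ̇_i.v` is strictly closer to it (`exists_step`). The squared distance, scaled to the integer
`potential`, therefore decreases until the small set is reached. The small set is finite because its
inequalities bound all differences of entries, and the sum of the entries is fixed
(`smallSet_finite`).
-/

/-- The bijection `σ̇_i` of `ℤ^l(s)` (entries 0-indexed): `σ̇_0` sends `(s_1,…,s_l)` to
`(s_l + n, s_2, …, s_{l−1}, s_1 − n)`, and for `1 ≤ i ≤ l−1`, `σ̇_i` swaps the `i`-th
and `(i+1)`-th entries. -/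
def sigmaMove (d : ℕ) (c : ℤ) (i : Fin d) (v : Fin d → ℤ) : Fin d → ℤ := fun j =>
  if i.val = 0 then
    (if j.val = 0 then v ⟨d - 1, by have := j.isLt; omega⟩ + c
     else if j.val = d - 1 then v ⟨0, by have := j.isLt; omega⟩ - c
     else v j)
  else
    (if j.val + 1 = i.val then v i
     else if j.val = i.val then v ⟨i.val - 1, by have := i.isLt; omega⟩
     else v j)

/-- Membership in the orbit `Ẇ_l·r` of `r` under the group generated by the
involutions `σ̇_0, …, σ̇_{l−1}`. -/
def inOrbit (n l : ℕ) (r v : Fin l → ℤ) : Prop :=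
  Relation.EqvGen (fun x y => ∃ i : Fin l, y = sigmaMove l (n : ℤ) i x) r v

/-- The arrows of the graph `Γ(M)`: `s_l → t_l` whenever `t_l = σ̇_i.s_l` and
`s_i − s_{i+1} ≥ M` (with `s_0 := n + s_l` when `i = 0`). -/
def gammaStep (n l : ℕ) (M : ℤ) (x y : Fin l → ℤ) : Prop :=
  ∃ i : Fin l, y = sigmaMove l (n : ℤ) i x ∧
    (if i.val = 0 then
       (n : ℤ) + x ⟨l - 1, by have := i.isLt; omega⟩ - x ⟨0, by have := i.isLt; omega⟩ ≥ M
     else x ⟨i.val - 1, by have := i.isLt; omega⟩ - x i ≥ M)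

/-- The set `{(t_1,…,t_l) ∈ ℤ^l(s) : t_{i+1} − t_i ≤ M − 1 for all 0 ≤ i ≤ l−1}`,
where `t_0 := n + t_l`. -/
def smallSet (n l : ℕ) (s : ℤ) (M : ℤ) : Set (Fin l → ℤ) :=
  {t | (∑ i, t i = s) ∧
       (∀ h : 0 < l, t ⟨0, h⟩ - ((n : ℤ) + t ⟨l - 1, by omega⟩) ≤ M - 1) ∧
       (∀ (k : ℕ) (h : k + 1 < l), t ⟨k + 1, h⟩ - t ⟨k, by omega⟩ ≤ M - 1)}

/-- `l²` times the squared distance from `v` to the point `(− n j / l)_j` inside the alcove. -/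
def potential (n l : ℕ) (v : Fin l → ℤ) : ℤ := ∑ j, ((l : ℤ) * v j + n * (j.val : ℤ)) ^ 2

/-- Effect of `σ̇_0`, which changes only the first and last entries, on a sum over the entries. -/
lemma sum_sigmaMove_zero (l : ℕ) (hl : 2 ≤ l) (c : ℤ) (i : Fin l) (hi : i.val = 0)
    (v : Fin l → ℤ) (F : ℕ → ℤ → ℤ) :
    ∑ j : Fin l, F j (sigmaMove l c i v j) = ∑ j : Fin l, F j (v j)
      + (F 0 (v ⟨l - 1, by omega⟩ + c) - F 0 (v ⟨0, by omega⟩))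
      + (F (l - 1) (v ⟨0, by omega⟩ - c) - F (l - 1) (v ⟨l - 1, by omega⟩)) := by
  have key : ∑ j : Fin l, (F j (sigmaMove l c i v j) - F j (v j))
      = (F 0 (v ⟨l - 1, by omega⟩ + c) - F 0 (v ⟨0, by omega⟩))
      + (F (l - 1) (v ⟨0, by omega⟩ - c) - F (l - 1) (v ⟨l - 1, by omega⟩)) := by
    rw [Fintype.sum_eq_add (⟨0, by omega⟩ : Fin l) ⟨l - 1, by omega⟩]
    · have h : l - 1 ≠ 0 := by omega
      simp [sigmaMove, hi, h]
    · simp only [ne_eq, Fin.mk.injEq]; omega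
    · rintro j ⟨h0, h1⟩
      have h0' : j.val ≠ 0 := fun h => h0 (Fin.ext h)
      have h1' : j.val ≠ l - 1 := fun h => h1 (Fin.ext h)
      simp only [sigmaMove, hi, h0', h1', if_true, if_false, sub_self]
  rw [Finset.sum_sub_distrib] at key
  linarith

/-- Effect of `σ̇_i`, `i ≥ 1`, which swaps two adjacent entries, on a sum over the entries. -/
lemma sum_sigmaMove_pos (l : ℕ) (c : ℤ) (k : ℕ) (hk : k + 1 < l)
    (v : Fin l → ℤ) (F : ℕ → ℤ → ℤ) :
    ∑ j : Fin l, F j (sigmaMove l c ⟨k + 1, hk⟩ v j) = ∑ j : Fin l, F j (v j)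
      + (F k (v ⟨k + 1, hk⟩) - F k (v ⟨k, by omega⟩))
      + (F (k + 1) (v ⟨k, by omega⟩) - F (k + 1) (v ⟨k + 1, hk⟩)) := by
  have key : ∑ j : Fin l, (F j (sigmaMove l c ⟨k + 1, hk⟩ v j) - F j (v j))
      = (F k (v ⟨k + 1, hk⟩) - F k (v ⟨k, by omega⟩))
      + (F (k + 1) (v ⟨k, by omega⟩) - F (k + 1) (v ⟨k + 1, hk⟩)) := by
    rw [Fintype.sum_eq_add (⟨k, by omega⟩ : Fin l) ⟨k + 1, hk⟩]
    · simp [sigmaMove]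
    · simp only [ne_eq, Fin.mk.injEq]; omega
    · rintro j ⟨h0, h1⟩
      have h0' : j.val ≠ k := fun h => h0 (Fin.ext h)
      have h1' : j.val ≠ k + 1 := fun h => h1 (Fin.ext h)
      simp [sigmaMove, h0', h1']
  rw [Finset.sum_sub_distrib] at key
  linarith

lemma sum_sigmaMove (l : ℕ) (hl : 2 ≤ l) (c : ℤ) (i : Fin l) (v : Fin l → ℤ) :
    ∑ j, sigmaMove l c i v j = ∑ j, v j := by
  obtain ⟨i, hi⟩ := i
  rcases i with _ | k
  · have := sum_sigmaMove_zero l hl c ⟨0, hi⟩ rfl v (fun _ x => x)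
    simp only at this
    linarith
  · have := sum_sigmaMove_pos l c k hi v (fun _ x => x)
    simp only at this
    linarith

lemma sum_eq_of_inOrbit (n l : ℕ) (hl : 2 ≤ l) {r v : Fin l → ℤ} (h : inOrbit n l r v) :
    ∑ j, v j = ∑ j, r j := by
  unfold inOrbit at h
  induction h with
  | rel x y h => obtain ⟨i, rfl⟩ := h; exact sum_sigmaMove l hl _ i x
  | refl x => rfl
  | symm x y _ ih => exact ih.symm
  | trans x y z _ _ ih1 ih2 => exact ih2.trans ih1

lemma potential_sigmaMove_zero (n l : ℕ) (hl : 2 ≤ l) (v : Fin l → ℤ) :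
    potential n l (sigmaMove l n ⟨0, by omega⟩ v)
      = potential n l v
        - 2 * n * l * (v ⟨0, by omega⟩ - (n + v ⟨l - 1, by omega⟩)) := by
  have h := sum_sigmaMove_zero l hl n ⟨0, by omega⟩ rfl v
    (fun j x => ((l : ℤ) * x + n * (j : ℤ)) ^ 2)
  have hc : ((l - 1 : ℕ) : ℤ) = (l : ℤ) - 1 := by omega
  simp only [hc] at h
  unfold potential
  rw [h]
  push_cast
  ring

lemma potential_sigmaMove_pos (n l : ℕ) (v : Fin l → ℤ) (k : ℕ) (hk : k + 1 < l) :
    potential n l (sigmaMove l n ⟨k + 1, hk⟩ v)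
      = potential n l v - 2 * n * l * (v ⟨k + 1, hk⟩ - v ⟨k, by omega⟩) := by
  have h := sum_sigmaMove_pos l n k hk v (fun j x => ((l : ℤ) * x + n * (j : ℤ)) ^ 2)
  simp only at h
  unfold potential
  rw [h]
  push_cast
  ring

/-- A vector outside the small set is the target of an arrow of `Γ(M)` whose source is strictly
closer to the centre of the alcove. -/
lemma exists_step (n l : ℕ) (hn : 2 ≤ n) (hl : 2 ≤ l) (M : ℕ) (hM : 1 ≤ M) (v : Fin l → ℤ)
    (hv : v ∉ smallSet n l (∑ j, v j) M) :
    ∃ i : Fin l, gammaStep n l M (sigmaMove l n i v) v ∧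
      potential n l (sigmaMove l n i v) < potential n l v := by
  have hpos : (0 : ℤ) < 2 * n * l := by positivity
  by_cases h0 : v ⟨0, by omega⟩ - ((n : ℤ) + v ⟨l - 1, by omega⟩) ≤ (M : ℤ) - 1
  · have h1 : ∃ (k : ℕ) (h : k + 1 < l), (M : ℤ) - 1 < v ⟨k + 1, h⟩ - v ⟨k, by omega⟩ := by
      by_contra! hcon
      exact hv ⟨rfl, fun _ => h0, hcon⟩
    obtain ⟨k, hk, hlt⟩ := h1
    refine ⟨⟨k + 1, hk⟩, ⟨⟨k + 1, hk⟩, ?_, ?_⟩, ?_⟩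
    · funext j
      by_cases hj : j.val = k
      · have : j = ⟨k, by omega⟩ := Fin.ext hj
        rw [this]; simp [sigmaMove]
      · by_cases hj' : j.val = k + 1
        · have : j = ⟨k + 1, hk⟩ := Fin.ext hj'
          rw [this]; simp [sigmaMove]
        · simp [sigmaMove, hj, hj']
    · simp [sigmaMove]; omega
    · rw [potential_sigmaMove_pos]
      have : 0 < v ⟨k + 1, hk⟩ - v ⟨k, by omega⟩ := by omega
      have := mul_pos hpos this
      linarith
  · have hne : l - 1 ≠ 0 := by omega
    refine ⟨⟨0, by omega⟩, ⟨⟨0, by omega⟩, ?_, ?_⟩, ?_⟩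
    · funext j
      by_cases hj : j.val = 0
      · have : j = ⟨0, by omega⟩ := Fin.ext hj
        rw [this]; simp [sigmaMove, hne]
      · by_cases hj' : j.val = l - 1
        · have : j = ⟨l - 1, by omega⟩ := Fin.ext hj'
          rw [this]; simp [sigmaMove, hne]
        · simp [sigmaMove, hj, hj']
    · simp [sigmaMove, hne]; omega
    · rw [potential_sigmaMove_zero n l hl]
      have : 0 < v ⟨0, by omega⟩ - ((n : ℤ) + v ⟨l - 1, by omega⟩) := by omega
      have := mul_pos hpos this
      linarith

lemma exists_connected_smallSet (n l : ℕ) (hn : 2 ≤ n) (hl : 2 ≤ l) (M : ℕ) (hM : 1 ≤ M)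
    (r v : Fin l → ℤ) (hv : inOrbit n l r v) :
    ∃ t, inOrbit n l r t ∧ t ∈ smallSet n l (∑ j, r j) (M : ℤ) ∧
      Relation.EqvGen (gammaStep n l (M : ℤ)) v t := by
  induction hm : (potential n l v).toNat using Nat.strong_induction_on generalizing v with
  | _ m ih =>
    by_cases hs : v ∈ smallSet n l (∑ j, v j) M
    · rw [sum_eq_of_inOrbit n l hl hv] at hs
      exact ⟨v, hv, hs, Relation.EqvGen.refl _⟩
    · obtain ⟨i, hstep, hlt⟩ := exists_step n l hn hl M hM v hs
      have hnn : 0 ≤ potential n l (sigmaMove l n i v) :=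
        Finset.sum_nonneg fun _ _ => sq_nonneg _
      obtain ⟨t, ht, hts, hvt⟩ := ih _ (by omega) (sigmaMove l n i v)
        (Relation.EqvGen.trans _ _ _ hv (Relation.EqvGen.rel _ _ ⟨i, rfl⟩)) rfl
      exact ⟨t, ht, hts,
        Relation.EqvGen.trans _ _ _ (Relation.EqvGen.symm _ _ (Relation.EqvGen.rel _ _ hstep)) hvt⟩

lemma smallSet_finite (n l : ℕ) (hl : 2 ≤ l) (s : ℤ) (M : ℕ) :
    (smallSet n l s (M : ℤ)).Finite := by
  -- `C` bounds all differences of entries: two increasing runs and one step around the cycle.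
  set C : ℤ := n + M + 2 * (l * M) with hC
  have hCnn : 0 ≤ C := by positivity
  refine (Set.finite_Icc (fun _ : Fin l => -(|s| + l * C)) (fun _ => |s| + l * C)).subset ?_
  rintro t ⟨hsum, h0, hk⟩
  have h0 := h0 (by omega)
  have hrun : ∀ (d a : ℕ) (h : a + d < l), t ⟨a + d, h⟩ ≤ t ⟨a, by omega⟩ + d * M := by
    intro d
    induction d with
    | zero => intro a h; simp
    | succ d ih =>
      intro a h
      have h1 := ih a (by omega)
      have h2 := hk (a + d) h
      have h3 : t ⟨a + (d + 1), h⟩ = t ⟨a + d + 1, h⟩ := rfl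
      rw [h3]
      push_cast
      linarith
  have hlen : ∀ d : ℕ, d < l → (d : ℤ) * M ≤ l * M := fun d hd => by
    have : (d : ℤ) ≤ l := by omega
    gcongr
  have hdiff : ∀ a b : Fin l, t a ≤ t b + C := by
    rintro ⟨a, ha⟩ ⟨b, hb⟩
    have h1 := hrun a 0 (by omega)
    have h2 := hrun (l - 1 - b) b (by omega)
    have e1 : (⟨0 + a, by omega⟩ : Fin l) = ⟨a, ha⟩ := Fin.ext (by simp)
    have e2 : (⟨b + (l - 1 - b), by omega⟩ : Fin l) = ⟨l - 1, by omega⟩ :=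
      Fin.ext (by simp; omega)
    rw [e1] at h1
    rw [e2] at h2
    have h3 := hlen a ha
    have h4 := hlen (l - 1 - b) (by omega)
    linarith
  have hl1 : (1 : ℤ) ≤ l := by omega
  have hup : ∀ a, (l : ℤ) * t a ≤ s + l * C := fun a => by
    have := Finset.sum_le_sum (fun b (_ : b ∈ Finset.univ) => hdiff a b)
    simp [Finset.sum_add_distrib, hsum] at this
    exact this
  have hlow : ∀ a, s - l * C ≤ (l : ℤ) * t a := fun a => by
    have := Finset.sum_le_sum (fun b (_ : b ∈ Finset.univ) => hdiff b a)
    simp [hsum] at this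
    linarith
  have hB : 0 ≤ |s| + l * C := by positivity
  have hs1 := le_abs_self s
  have hs2 := neg_abs_le s
  constructor
  · intro a
    show -(|s| + l * C) ≤ t a
    by_contra! hlt
    have := hlow a
    nlinarith
  · intro a
    show t a ≤ |s| + l * C
    by_contra! hlt
    have := hup a
    nlinarith

/-- For every `M ≥ 1` the graph `Γ(M)` has finitely many connected components
(there is a finite set of vertices meeting every component); moreover every
connected component contains a vertex belonging to the finite set `smallSet`. -/
theorem stmt_5 (n l : ℕ) (hn : 2 ≤ n) (hl : 2 ≤ l) (s : ℤ)
    (r : Fin l → ℤ)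
    (hr : (∑ i, r i = s) ∧ (∀ i j : Fin l, i ≤ j → r j ≤ r i) ∧
          r ⟨0, by omega⟩ - r ⟨l - 1, by omega⟩ ≤ (n : ℤ))
    (M : ℕ) (hM : 1 ≤ M) :
    (smallSet n l s (M : ℤ)).Finite ∧
    (∃ F : Finset (Fin l → ℤ), ∀ v, inOrbit n l r v →
      ∃ f ∈ F, inOrbit n l r f ∧ Relation.EqvGen (gammaStep n l (M : ℤ)) v f) ∧
    (∀ v, inOrbit n l r v →
      ∃ t, inOrbit n l r t ∧ t ∈ smallSet n l s (M : ℤ) ∧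
        Relation.EqvGen (gammaStep n l (M : ℤ)) v t) := by
  have hfin := smallSet_finite n l hl s M
  have hconn : ∀ v, inOrbit n l r v → ∃ t, inOrbit n l r t ∧ t ∈ smallSet n l s (M : ℤ) ∧
      Relation.EqvGen (gammaStep n l (M : ℤ)) v t := fun v hv =>
    hr.1 ▸ exists_connected_smallSet n l hn hl M hM r v hv
  refine ⟨hfin, ⟨hfin.toFinset, fun v hv => ?_⟩, hconn⟩
  obtain ⟨t, ht, hts, hvt⟩ := hconn v hv
  exact ⟨t, hfin.mem_toFinset.2 hts, ht, hvt⟩
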